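/- arXiv:math/0410252 — 2 statements merged into one kernel-verified Lean document; each statement's English description precedes it below -/
import Mathlib

section
/- Let n ≥ 1 and k ≥ 1 be integers and let M be a linear subspace of the space of homogeneous polynomials of degree k in ℂ[x_0,…,x_n]. Let Λ ⊂ ℙⁿ(ℂ) be the set of common zeros of all members of M, and suppose that Λ is finite. Then the points of Λ impose independent linear conditions on homogeneous polynomials of degree n(k−1): for every point P ∈ Λ there exists a homogeneous polynomial of degree n(k−1) in ℂ[x_0,…,x_n] that vanishes at every point of Λ \ {P} and does not vanish at P. -/
open MvPolynomial

noncomputable section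

/-- The projective space `ℙ^N(ℂ)`. -/
abbrev ProjPt (N : ℕ) := Projectivization ℂ (Fin (N + 1) → ℂ)

/-- A (homogeneous) polynomial vanishes at a point of projective space. -/
def VanishesAt {N : ℕ} (F : MvPolynomial (Fin (N + 1)) ℂ) (p : ProjPt N) : Prop :=
  eval p.rep F = 0



attribute [local instance] MvPolynomial.gradedAlgebra

def RegMod {σ : Type*} (J : Ideal (MvPolynomial σ ℂ)) (f : MvPolynomial σ ℂ) : Prop :=
  ∀ u, f * u ∈ J → u ∈ J

lemma regMod_exchange {σ : Type*} (J : Ideal (MvPolynomial σ ℂ)) (x f : MvPolynomial σ ℂ)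
    (hx : RegMod J x) (hf : RegMod (J ⊔ Ideal.span {x}) f) :
    RegMod (J ⊔ Ideal.span {f}) x := by
  intro u hu
  obtain ⟨j, hj, t, ht, hjt⟩ := Submodule.mem_sup.1 hu
  obtain ⟨v, rfl⟩ := Ideal.mem_span_singleton'.1 ht
  have h1 : v ∈ J ⊔ Ideal.span {x} := by
    apply hf
    have : f * v = x * u - j := by rw [← hjt]; ring
    rw [this]
    exact sub_mem (Ideal.mul_mem_right _ _ (Ideal.mem_sup_right (Ideal.mem_span_singleton_self x)))
      (Ideal.mem_sup_left hj)
  obtain ⟨j', hj', t', ht', hjt'⟩ := Submodule.mem_sup.1 h1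
  obtain ⟨w, rfl⟩ := Ideal.mem_span_singleton'.1 ht'
  have h2 : u - f * w ∈ J := by
    apply hx
    have : x * (u - f * w) = j + f * j' := by
      have : x * u = j + (j' + w * x) * f := by rw [hjt', hjt]
      rw [mul_sub, this]; ring
    rw [this]
    exact add_mem hj (J.mul_mem_left _ hj')
  have : u = (u - f * w) + w * f := by ring
  rw [this]
  exact add_mem (Ideal.mem_sup_left h2)
    (Ideal.mem_sup_right (Ideal.mem_span_singleton'.2 ⟨w, rfl⟩))

lemma comp_mul {σ : Type*} {a : ℕ} (d : ℕ) (f g : MvPolynomial σ ℂ) (hf : f.IsHomogeneous a) :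
    homogeneousComponent (a + d) (f * g) = f * homogeneousComponent d g := by
  have := DirectSum.coe_decompose_mul_add_of_left_mem (homogeneousSubmodule σ ℂ) (i := a) (j := d)
    (a := f) (b := g) hf
  have key : ∀ (p : MvPolynomial σ ℂ) (i : ℕ),
      ((DirectSum.decompose (homogeneousSubmodule σ ℂ) p i : homogeneousSubmodule σ ℂ i) :
        MvPolynomial σ ℂ) = homogeneousComponent i p :=
    fun p i => decomposition.decompose'_apply p i
  rwa [key, key] at this

/-- surjectivity step: forms of degree `d > e` lie in `J + (b)`, b linear. -/
lemma exists_pow_repr {σ : Type*} (J : Ideal (MvPolynomial σ ℂ))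
    (hJ : J.IsHomogeneous (homogeneousSubmodule σ ℂ)) (b : MvPolynomial σ ℂ)
    (hb : b.IsHomogeneous 1) (e : ℕ)
    (h : ∀ d, e < d → ∀ F : MvPolynomial σ ℂ, F.IsHomogeneous d → F ∈ J ⊔ Ideal.span {b})
    (m : ℕ) (hm : e ≤ m) (k : ℕ) :
    ∀ F : MvPolynomial σ ℂ, F.IsHomogeneous (m + k) →
      ∃ g : MvPolynomial σ ℂ, g.IsHomogeneous m ∧ F - b ^ k * g ∈ J := by
  induction k with
  | zero => intro F hF; exact ⟨F, hF, by simp⟩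
  | succ k ih =>
    intro F hF
    obtain ⟨j, hj, t, ht, hjt⟩ := Submodule.mem_sup.1 (h (m + (k + 1)) (by omega) F hF)
    obtain ⟨v, rfl⟩ := Ideal.mem_span_singleton'.1 ht
    obtain ⟨g, hg, hgJ⟩ := ih (homogeneousComponent (m + k) v)
      (homogeneousComponent_isHomogeneous _ _)
    refine ⟨g, hg, ?_⟩
    have h1 : F - b * homogeneousComponent (m + k) v ∈ J := by
      have h2 : homogeneousComponent (m + (k + 1)) F = F := homogeneousComponent_eq_self hF
      rw [← hjt, map_add] at h2
      have h3 : m + (k + 1) = 1 + (m + k) := by ring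
      rw [mul_comm v b] at h2
      rw [← hjt]
      rw [mul_comm v b, ← h2, h3, comp_mul _ _ _ hb]
      simp only [add_sub_cancel_right]
      exact homogeneousComponent_mem_of_mem hJ hj _
    have : F - b ^ (k + 1) * g = (F - b * homogeneousComponent (m + k) v)
        + b * (homogeneousComponent (m + k) v - b ^ k * g) := by ring
    rw [this]
    exact add_mem h1 (J.mul_mem_left _ hgJ)

lemma count_step {σ : Type*} [Finite σ] (J : Ideal (MvPolynomial σ ℂ))
    (hJ : J.IsHomogeneous (homogeneousSubmodule σ ℂ)) (a b : MvPolynomial σ ℂ) (k : ℕ)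
    (ha : a.IsHomogeneous k) (hreg : RegMod J a)
    (hb : b.IsHomogeneous 1) (e : ℕ)
    (h : ∀ d, e < d → ∀ F : MvPolynomial σ ℂ, F.IsHomogeneous d → F ∈ J ⊔ Ideal.span {b})
    (d : ℕ) (hd : e + k ≤ d) (F : MvPolynomial σ ℂ) (hF : F.IsHomogeneous d) :
    F ∈ J ⊔ Ideal.span {a} := by
  obtain ⟨m, rfl⟩ : ∃ m, d = m + k := ⟨d - k, by omega⟩
  let V := homogeneousSubmodule σ ℂ m
  have : FiniteDimensional ℂ V :=
    Module.Finite.iff_fg.2 (homogeneousSubmodule_fg _ _ m)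
  let q : MvPolynomial σ ℂ →ₗ[ℂ] (MvPolynomial σ ℂ ⧸ J) := (Ideal.Quotient.mkₐ ℂ J).toLinearMap
  let α : V →ₗ[ℂ] (MvPolynomial σ ℂ ⧸ J) := q ∘ₗ LinearMap.mulLeft ℂ a ∘ₗ V.subtype
  let β : V →ₗ[ℂ] (MvPolynomial σ ℂ ⧸ J) := q ∘ₗ LinearMap.mulLeft ℂ (b ^ k) ∘ₗ V.subtype
  have hq : ∀ u, q u = 0 ↔ u ∈ J := fun u => Ideal.Quotient.eq_zero_iff_mem
  have hα : ∀ u : V, α u = q (a * u) := fun _ => rfl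
  have hβ : ∀ u : V, β u = q (b ^ k * u) := fun _ => rfl
  have hsurj : ∀ G : MvPolynomial σ ℂ, G.IsHomogeneous (m + k) → q G ∈ LinearMap.range β := by
    intro G hG
    obtain ⟨g, hg, hgJ⟩ := exists_pow_repr J hJ b hb e h m (by omega) k G hG
    refine ⟨⟨g, hg⟩, ?_⟩
    rw [hβ, eq_comm, ← sub_eq_zero, ← map_sub, hq]
    exact hgJ
  have hle : LinearMap.range α ≤ LinearMap.range β := by
    rintro _ ⟨u, rfl⟩
    rw [hα]
    apply hsurj
    rw [add_comm]
    exact ha.mul u.2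
  have hker : LinearMap.ker α ≤ LinearMap.ker β := by
    intro u hu
    rw [LinearMap.mem_ker, hα, hq] at hu
    rw [LinearMap.mem_ker, hβ, hq]
    exact J.mul_mem_left _ (hreg _ hu)
  have hfr : Module.finrank ℂ (LinearMap.range β) ≤ Module.finrank ℂ (LinearMap.range α) := by
    have h1 := LinearMap.finrank_range_add_finrank_ker α
    have h2 := LinearMap.finrank_range_add_finrank_ker β
    have h3 := Submodule.finrank_mono hker
    omega
  have heq := Submodule.eq_of_le_of_finrank_le hle hfr
  have := hsurj F hF
  rw [← heq] at this
  obtain ⟨u, hu⟩ := this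
  rw [hα, eq_comm, ← sub_eq_zero, ← map_sub, hq] at hu
  have h5 : F = (F - a * u) + u * a := by ring
  rw [h5]
  exact add_mem (Ideal.mem_sup_left hu)
    (Ideal.mem_sup_right (Ideal.mem_span_singleton'.2 ⟨_, rfl⟩))

lemma exists_reg {σ : Type*} [Finite σ] (M : Submodule ℂ (MvPolynomial σ ℂ))
    (hrad : ∀ i, X i ∈ (Ideal.span (M : Set (MvPolynomial σ ℂ))).radical)
    (N : ℕ) (J : ℕ → Ideal (MvPolynomial σ ℂ))
    (hJ : ∀ j < N, ∃ i, RegMod (J j) (X i)) :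
    ∃ f ∈ M, ∀ j < N, RegMod (J j) f := by
  classical
  let A : Set (Ideal (MvPolynomial σ ℂ)) :=
    ⋃ j ∈ Set.Iio N, associatedPrimes (MvPolynomial σ ℂ) (MvPolynomial σ ℂ ⧸ J j)
  have hA : A.Finite := (Set.finite_Iio N).biUnion fun j _ => associatedPrimes.finite _ _
  have hreg : ∀ j f, RegMod (J j) f ↔
      f ∉ ⋃ p ∈ associatedPrimes (MvPolynomial σ ℂ) (MvPolynomial σ ℂ ⧸ J j),
        (p : Set (MvPolynomial σ ℂ)) := by
    intro j f
    rw [biUnion_associatedPrimes_eq_compl_regular, Set.notMem_compl_iff, Set.mem_ofPred_eq,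
      isSMulRegular_iff_right_eq_zero_of_smul]
    have hsm : ∀ x, f • Ideal.Quotient.mk (J j) x = Ideal.Quotient.mk (J j) (f * x) :=
      fun x => rfl
    constructor
    · intro h x hx
      obtain ⟨x, rfl⟩ := Ideal.Quotient.mk_surjective x
      rw [hsm, Ideal.Quotient.eq_zero_iff_mem] at hx
      exact Ideal.Quotient.eq_zero_iff_mem.2 (h _ hx)
    · intro h u hu
      have := h (Ideal.Quotient.mk _ u) (by
        rw [hsm, Ideal.Quotient.eq_zero_iff_mem]; exact hu)
      exact Ideal.Quotient.eq_zero_iff_mem.1 this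
  let s : Finset (Subspace ℂ M) :=
    hA.toFinset.image fun p => (p.restrictScalars ℂ).comap M.subtype
  have hs : ⊤ ∉ s := by
    intro htop
    obtain ⟨p, hp, hpt⟩ := Finset.mem_image.1 htop
    rw [Set.Finite.mem_toFinset] at hp
    obtain ⟨j, hj, hpj⟩ := Set.mem_iUnion₂.1 hp
    have hMp : Ideal.span (M : Set (MvPolynomial σ ℂ)) ≤ p := by
      rw [Ideal.span_le]
      intro f hf
      have : (⟨f, hf⟩ : M) ∈ (p.restrictScalars ℂ).comap M.subtype := by rw [hpt]; trivial
      exact this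
    have hprime : p.IsPrime := IsAssociatedPrime.isPrime hpj
    obtain ⟨i, hi⟩ := hJ j hj
    apply (hreg j (X i)).1 hi
    refine Set.mem_iUnion₂.2 ⟨p, hpj, ?_⟩
    exact (hprime.radical_le_iff.2 hMp) (hrad i)
  have hne := Subspace.biUnion_ne_univ_of_top_notMem hs
  obtain ⟨f, hf⟩ := (Set.ne_univ_iff_exists_notMem _).1 hne
  refine ⟨f, f.2, fun j hj => (hreg j f).2 fun hfp => hf ?_⟩
  obtain ⟨p, hp, hfp⟩ := Set.mem_iUnion₂.1 hfp
  refine Set.mem_iUnion₂.2 ⟨(p.restrictScalars ℂ).comap M.subtype, ?_, hfp⟩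
  exact Finset.mem_image.2 ⟨p, hA.mem_toFinset.2 (Set.mem_iUnion₂.2 ⟨j, hj, hp⟩), rfl⟩

lemma reg_base (n : ℕ) (j : ℕ) (hj : j < n) :
    RegMod (Ideal.span ((X : Fin n → MvPolynomial (Fin n) ℂ) '' {t | t.1 < j})) (X ⟨j, hj⟩) := by
  intro u hu
  rw [mem_ideal_span_X_image] at hu ⊢
  intro m hm
  obtain ⟨i, hi, him⟩ := hu (Finsupp.single ⟨j, hj⟩ 1 + m) (by
    rw [mem_support_iff] at hm ⊢
    rwa [coeff_X_mul])
  refine ⟨i, hi, ?_⟩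
  have : (⟨j, hj⟩ : Fin n) ≠ i := by
    rintro rfl; simp at hi
  simpa [Finsupp.single_apply, this] using him

lemma base_succ (n j : ℕ) (hj : j < n) :
    Ideal.span ((X : Fin n → MvPolynomial (Fin n) ℂ) '' {t | t.1 < j + 1}) =
    Ideal.span ((X : Fin n → MvPolynomial (Fin n) ℂ) '' {t | t.1 < j}) ⊔
      Ideal.span {X ⟨j, hj⟩} := by
  have h : {t : Fin n | t.1 < j + 1} = {t : Fin n | t.1 < j} ∪ {⟨j, hj⟩} := by
    ext t
    simp only [Set.mem_ofPred_eq, Set.mem_union, Set.mem_singleton_iff, Fin.ext_iff]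
    omega
  rw [h, Set.image_union, Ideal.span_union, Set.image_singleton]

lemma base_top (n d : ℕ) (hd : 0 < d) (F : MvPolynomial (Fin n) ℂ) (hF : F.IsHomogeneous d) :
    F ∈ Ideal.span ((X : Fin n → MvPolynomial (Fin n) ℂ) '' {t | t.1 < n}) := by
  rw [mem_ideal_span_X_image]
  intro m hm
  have hdeg := hF.degree_eq_sum_deg_support hm
  by_contra hcon
  push Not at hcon
  have : m = 0 := by
    ext t
    exact hcon t (by simp)
  subst this
  simp at hdeg
  omega

lemma macaulay_aux (n k : ℕ) (hk : 1 ≤ k) (M : Submodule ℂ (MvPolynomial (Fin n) ℂ))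
    (hM : ∀ F ∈ M, F.IsHomogeneous k)
    (hrad : ∀ i, X i ∈ (Ideal.span (M : Set (MvPolynomial (Fin n) ℂ))).radical) (i : ℕ)
    (hi : i ≤ n) :
    ∃ J : ℕ → Ideal (MvPolynomial (Fin n) ℂ),
      (∀ j, (J j).IsHomogeneous (homogeneousSubmodule (Fin n) ℂ)) ∧
      (∀ j (hj : j < n), J (j + 1) = J j ⊔ Ideal.span {X ⟨j, hj⟩}) ∧
      J 0 ≤ Ideal.span (M : Set (MvPolynomial (Fin n) ℂ)) ∧
      (∀ j (hj : j + i < n), RegMod (J j) (X ⟨j, by omega⟩)) ∧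
      (∀ d, i * (k - 1) < d → ∀ F : MvPolynomial (Fin n) ℂ, F.IsHomogeneous d → F ∈ J (n - i)) := by
  induction i with
  | zero =>
    refine ⟨fun j => Ideal.span ((X : Fin n → MvPolynomial (Fin n) ℂ) '' {t | t.1 < j}),
      ?_, ?_, ?_, fun j hj => reg_base n j hj, ?_⟩
    · intro j
      apply Ideal.homogeneous_span
      rintro _ ⟨t, -, rfl⟩
      exact ⟨1, isHomogeneous_X _ _⟩
    · intro j hj
      exact base_succ n j hj
    · simp
    · intro d hd F hF
      exact base_top n d (by simpa using hd) F hF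
  | succ i ih =>
    obtain ⟨J, h1, h2, h3, h4, h5⟩ := ih (by omega)
    obtain ⟨f, hfM, hf⟩ := exists_reg M hrad (n - i) J
      (fun j hj => ⟨⟨j, by omega⟩, h4 j (by omega)⟩)
    refine ⟨fun j => J j ⊔ Ideal.span {f}, ?_, ?_, ?_, ?_, ?_⟩
    · intro j
      refine (h1 j).sup (Ideal.homogeneous_span _ _ ?_)
      rintro x rfl
      exact ⟨k, hM _ hfM⟩
    · intro j hj
      simp only
      rw [h2 j hj, sup_assoc, sup_assoc, sup_comm (Ideal.span {f})]
    · refine sup_le h3 (Ideal.span_mono ?_)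
      simpa using hfM
    · intro j hj
      apply regMod_exchange _ _ _ (h4 j (by omega))
      rw [← h2 j (by omega)]
      exact hf (j + 1) (by omega)
    · intro d hd F hF
      have hlt : n - (i + 1) < n := by omega
      refine count_step (J (n - (i + 1))) (h1 _) f (X ⟨n - (i + 1), hlt⟩) k (hM _ hfM)
        (hf _ (by omega)) (isHomogeneous_X _ _) (i * (k - 1)) ?_ d ?_ F hF
      · rw [← h2 _ hlt]
        have : n - (i + 1) + 1 = n - i := by omega
        rw [this]
        exact h5
      · rw [add_mul] at hd
        omega

lemma macaulay (n k : ℕ) (hk : 1 ≤ k) (M : Submodule ℂ (MvPolynomial (Fin n) ℂ))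
    (hM : ∀ F ∈ M, F.IsHomogeneous k)
    (hV : ∀ y : Fin n → ℂ, (∀ F ∈ M, eval y F = 0) → y = 0)
    (d : ℕ) (hd : n * (k - 1) < d) (F : MvPolynomial (Fin n) ℂ) (hF : F.IsHomogeneous d) :
    F ∈ Ideal.span (M : Set (MvPolynomial (Fin n) ℂ)) := by
  obtain ⟨J, h1, h2, h3, h4, h5⟩ := macaulay_aux n k hk M hM (by
    intro i
    rw [← vanishingIdeal_zeroLocus_eq_radical (K := ℂ)]
    rw [mem_vanishingIdeal_iff]
    intro y hy
    have : y = 0 := hV y fun F hF => by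
      have := (mem_zeroLocus_iff.1 hy) F (Ideal.subset_span hF)
      simpa [aeval_eq_eval] using this
    simp [this]) n le_rfl
  apply h3
  simpa using h5 d hd F hF

/-- the linear form with coefficients `c` -/
def linForm {σ : Type*} [Fintype σ] (c : σ → ℂ) : MvPolynomial σ ℂ := ∑ i, C (c i) * X i

lemma linForm_hom {σ : Type*} [Fintype σ] (c : σ → ℂ) : (linForm c).IsHomogeneous 1 :=
  IsHomogeneous.sum _ _ _ fun i _ => isHomogeneous_C_mul_X _ _

lemma eval_linForm {σ : Type*} [Fintype σ] (c y : σ → ℂ) :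
    eval y (linForm c) = ∑ i, c i * y i := by
  simp [linForm]

lemma eval_smul_hom {σ : Type*} {k : ℕ} (F : MvPolynomial σ ℂ) (hF : F.IsHomogeneous k)
    (a : ℂ) (v : σ → ℂ) (h : eval v F = 0) : eval (a • v) F = 0 := by
  have : eval (a • v) F = a ^ k * eval v F := by
    rw [eval_eq, eval_eq, Finset.mul_sum]
    refine Finset.sum_congr rfl fun d hd => ?_
    have hdeg := hF.degree_eq_sum_deg_support hd
    simp only [Pi.smul_apply, smul_eq_mul, mul_pow, Finset.prod_mul_distrib,
      Finset.prod_pow_eq_pow_sum]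
    rw [hdeg]
    ring
  rw [this, h, mul_zero]

lemma exists_sep {n : ℕ} (P Q : ProjPt n) (h : Q ≠ P) :
    ∃ L : MvPolynomial (Fin (n + 1)) ℂ, L.IsHomogeneous 1 ∧ VanishesAt L Q ∧ ¬ VanishesAt L P := by
  by_contra hcon
  push Not at hcon
  have key : ∀ i j, Q.rep j * P.rep i = Q.rep i * P.rep j := by
    intro i j
    have := hcon (C (Q.rep j) * X i - C (Q.rep i) * X j)
      ((isHomogeneous_C_mul_X _ _).sub (isHomogeneous_C_mul_X _ _)) (by
        simp [VanishesAt, mul_comm])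
    simp only [VanishesAt, map_sub, map_mul, eval_C, eval_X] at this
    exact sub_eq_zero.1 this
  obtain ⟨j, hj⟩ := Function.ne_iff.1 Q.rep_nonzero
  simp only [Pi.zero_apply] at hj
  apply h
  rw [← Q.mk_rep, ← P.mk_rep, eq_comm, Projectivization.mk_eq_mk_iff']
  refine ⟨P.rep j / Q.rep j, ?_⟩
  ext i
  simp only [Pi.smul_apply, smul_eq_mul]
  have := key i j
  field_simp
  linear_combination -this

lemma exists_generic {n : ℕ} (Λ : Set (ProjPt n)) (hfin : Λ.Finite) :
    ∃ c : Fin (n + 1) → ℂ, c 0 ≠ 0 ∧ ∀ Q ∈ Λ, eval Q.rep (linForm c) ≠ 0 := by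
  classical
  let K : (Fin (n + 1) → ℂ) → Subspace ℂ (Fin (n + 1) → ℂ) := fun v =>
    LinearMap.ker (∑ i, v i • LinearMap.proj (R := ℂ) (φ := fun _ : Fin (n + 1) => ℂ) i)
  have hK : ∀ v c, c ∈ K v ↔ ∑ i, v i * c i = 0 := by
    intro v c
    simp [K, LinearMap.mem_ker]
  have hKt : ∀ v, v ≠ 0 → K v ≠ ⊤ := by
    intro v hv ht
    obtain ⟨j, hj⟩ := Function.ne_iff.1 hv
    have : Pi.single j 1 ∈ K v := by rw [ht]; trivial
    rw [hK] at this
    simp [Pi.single_apply] at this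
    exact hj this
  let s : Finset (Subspace ℂ (Fin (n + 1) → ℂ)) :=
    insert (K (Pi.single 0 1)) (hfin.toFinset.image fun Q => K Q.rep)
  have hs : ⊤ ∉ s := by
    intro h
    rcases Finset.mem_insert.1 h with h | h
    · exact hKt _ (by simp) h.symm
    · obtain ⟨Q, -, hQ⟩ := Finset.mem_image.1 h
      exact hKt _ Q.rep_nonzero hQ
  obtain ⟨c, hc⟩ := (Set.ne_univ_iff_exists_notMem _).1 (Subspace.biUnion_ne_univ_of_top_notMem hs)
  refine ⟨c, fun h0 => hc ?_, fun Q hQ h0 => hc ?_⟩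
  · refine Set.mem_iUnion₂.2 ⟨K (Pi.single 0 1), Finset.mem_insert_self _ _, ?_⟩
    rw [SetLike.mem_coe, hK]
    simp [Pi.single_apply, h0]
  · refine Set.mem_iUnion₂.2 ⟨K Q.rep, Finset.mem_insert_of_mem
      (Finset.mem_image.2 ⟨Q, hfin.mem_toFinset.2 hQ, rfl⟩), ?_⟩
    rw [SetLike.mem_coe, hK]
    rw [eval_linForm] at h0
    simpa [mul_comm] using h0

/-- images of the variables under restriction to the hyperplane `linForm c = 0` -/
def restrVar {n : ℕ} (c : Fin (n + 1) → ℂ) : Fin (n + 1) → MvPolynomial (Fin n) ℂ :=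
  Fin.cons (linForm fun i : Fin n => -(c 0)⁻¹ * c i.succ) X

lemma restrVar_hom {n : ℕ} (c : Fin (n + 1) → ℂ) (i : Fin (n + 1)) :
    (restrVar c i).IsHomogeneous 1 := by
  refine Fin.cases ?_ (fun i => ?_) i
  · exact linForm_hom _
  · exact isHomogeneous_X _ _

lemma restr_mem {n : ℕ} (c : Fin (n + 1) → ℂ) (hc : c 0 ≠ 0) (H : MvPolynomial (Fin (n + 1)) ℂ) :
    H - rename Fin.succ (aeval (restrVar c) H) ∈ Ideal.span {linForm c} := by
  rw [← Ideal.Quotient.eq]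
  have : (Ideal.Quotient.mkₐ ℂ (Ideal.span {linForm c})) =
      (Ideal.Quotient.mkₐ ℂ (Ideal.span {linForm c})).comp
        ((rename Fin.succ).comp (aeval (restrVar c))) := by
    apply MvPolynomial.algHom_ext
    intro i
    refine Fin.cases ?_ (fun i => ?_) i
    · simp only [AlgHom.comp_apply, aeval_X, Ideal.Quotient.mkₐ_eq_mk]
      rw [Ideal.Quotient.eq, Ideal.mem_span_singleton']
      refine ⟨C (c 0)⁻¹, ?_⟩
      have h1 : C (c 0)⁻¹ * (C (c 0) * X 0) = (X 0 : MvPolynomial (Fin (n + 1)) ℂ) := by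
        rw [← mul_assoc, ← C_mul, inv_mul_cancel₀ hc, C_1, one_mul]
      simp only [restrVar, Fin.cons_zero, linForm, map_sum, map_mul, rename_X, rename_C, map_neg,
        Fin.sum_univ_succ, mul_add, h1, Finset.mul_sum]
      rw [sub_eq_add_neg, ← Finset.sum_neg_distrib]
      congr 1
      refine Finset.sum_congr rfl fun i _ => ?_
      ring
    · simp [restrVar]
  exact DFunLike.congr_fun this H

lemma descend (n k : ℕ) (hk : 1 ≤ k)
    (M : Submodule ℂ (MvPolynomial (Fin (n + 1)) ℂ))
    (hM : ∀ F ∈ M, F.IsHomogeneous k)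
    (Λ : Set (ProjPt n))
    (hΛ : Λ = {p : ProjPt n | ∀ F ∈ M, VanishesAt F p})
    (c : Fin (n + 1) → ℂ) (hc : c 0 ≠ 0) (hcΛ : ∀ Q ∈ Λ, eval Q.rep (linForm c) ≠ 0)
    (d : ℕ) (hd : n * (k - 1) ≤ d) (H : MvPolynomial (Fin (n + 1)) ℂ)
    (hH : H.IsHomogeneous (1 + d)) :
    ∃ g : MvPolynomial (Fin (n + 1)) ℂ, g.IsHomogeneous d ∧
      ∀ Q ∈ Λ, eval Q.rep H = eval Q.rep (linForm c) * eval Q.rep g := by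
  let φ : MvPolynomial (Fin (n + 1)) ℂ →ₐ[ℂ] MvPolynomial (Fin n) ℂ := aeval (restrVar c)
  have hφ : ∀ (e : ℕ) (F : MvPolynomial (Fin (n + 1)) ℂ), F.IsHomogeneous e →
      (φ F).IsHomogeneous e := by
    intro e F hF
    have := hF.aeval (restrVar c) (restrVar_hom c)
    rw [one_mul] at this
    exact this
  have hsurj : Function.Surjective φ := by
    intro p
    refine ⟨rename Fin.succ p, ?_⟩
    simp only [φ, aeval_rename]
    have : restrVar c ∘ Fin.succ = X := by ext1 i; simp [restrVar]
    rw [this, aeval_X_left_apply]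
  have hspan : Ideal.span ((M.map φ.toLinearMap : Submodule ℂ _) : Set (MvPolynomial (Fin n) ℂ))
      = (Ideal.span (M : Set (MvPolynomial (Fin (n + 1)) ℂ))).map φ := by
    rw [Ideal.map_span]
    rfl
  have hmem : φ H ∈ (Ideal.span (M : Set (MvPolynomial (Fin (n + 1)) ℂ))).map φ := by
    rw [← hspan]
    refine macaulay n k hk _ ?_ ?_ (1 + d) (by omega) _ (hφ _ _ hH)
    · rintro _ ⟨F, hF, rfl⟩
      exact hφ _ _ (hM F hF)
    · intro y hy
      by_contra hy0
      let v : Fin (n + 1) → ℂ := fun i => eval y (restrVar c i)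
      have hvs : ∀ i : Fin n, v i.succ = y i := fun i => by simp [v, restrVar]
      have hv : v ≠ 0 := by
        intro hv
        apply hy0
        ext i
        rw [← hvs, hv]; rfl
      have hev : ∀ F ∈ M, eval v F = 0 := by
        intro F hF
        have h1 := hy (φ F) ⟨F, hF, rfl⟩
        have h2 : eval y (φ F) = eval v F := by
          simp only [φ, v]
          rw [← coe_aeval_eq_eval, ← coe_aeval_eq_eval]
          simp only [RingHom.coe_coe]
          rw [← AlgHom.comp_apply, comp_aeval]
        rw [← h2, h1]
      obtain ⟨a, ha⟩ := Projectivization.exists_smul_eq_mk_rep ℂ v hv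
      have ha' : (a : ℂ) • v = (Projectivization.mk ℂ v hv).rep := ha
      have hpΛ : Projectivization.mk ℂ v hv ∈ Λ := by
        rw [hΛ]
        intro F hF
        rw [VanishesAt, ← ha']
        exact eval_smul_hom F (hM F hF) _ _ (hev F hF)
      apply hcΛ _ hpΛ
      rw [← ha']
      refine eval_smul_hom _ (linForm_hom c) _ _ ?_
      rw [eval_linForm, Fin.sum_univ_succ]
      simp only [hvs]
      have hv0 : v 0 = ∑ i : Fin n, -(c 0)⁻¹ * c i.succ * y i := by
        simp only [v, restrVar, Fin.cons_zero, eval_linForm]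
      rw [hv0, Finset.mul_sum, ← Finset.sum_add_distrib]
      refine Finset.sum_eq_zero fun i _ => ?_
      field_simp
      ring
  obtain ⟨G, hG, hGH⟩ := (Ideal.mem_map_iff_of_surjective φ hsurj).1 hmem
  have hsub := restr_mem c hc (H - G)
  have h0 : aeval (restrVar c) (H - G) = 0 := by
    change φ (H - G) = 0
    rw [map_sub, hGH, sub_self]
  rw [h0, map_zero, sub_zero] at hsub
  obtain ⟨g, hg⟩ := Ideal.mem_span_singleton'.1 hsub
  refine ⟨homogeneousComponent d g, homogeneousComponent_isHomogeneous _ _, fun Q hQ => ?_⟩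
  have hhom : (Ideal.span (M : Set (MvPolynomial (Fin (n + 1)) ℂ))).IsHomogeneous
      (homogeneousSubmodule (Fin (n + 1)) ℂ) :=
    Ideal.homogeneous_span _ _ fun F hF => ⟨k, hM F hF⟩
  have hGd := homogeneousComponent_mem_of_mem hhom hG (1 + d)
  have hvan : ∀ p ∈ Ideal.span (M : Set (MvPolynomial (Fin (n + 1)) ℂ)), eval Q.rep p = 0 := by
    have : Ideal.span (M : Set (MvPolynomial (Fin (n + 1)) ℂ)) ≤ RingHom.ker (eval Q.rep) := by
      rw [Ideal.span_le]
      intro F hF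
      rw [hΛ] at hQ
      exact hQ F hF
    exact fun p hp => this hp
  have heq : H = G + linForm c * g := by rw [mul_comm, hg]; ring
  have h2 : homogeneousComponent (1 + d) H = H := homogeneousComponent_eq_self hH
  rw [heq, map_add, comp_mul _ _ _ (linForm_hom c), ← heq] at h2
  rw [← h2, map_add, map_mul, hvan _ hGd, zero_add]

theorem stmt_0 (n k : ℕ) (hn : 1 ≤ n) (hk : 1 ≤ k)
    (M : Submodule ℂ (MvPolynomial (Fin (n + 1)) ℂ))
    (hM : ∀ F ∈ M, F.IsHomogeneous k)
    (Λ : Set (ProjPt n))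
    (hΛ : Λ = {p : ProjPt n | ∀ F ∈ M, VanishesAt F p})
    (hfin : Λ.Finite) :
    ∀ P ∈ Λ, ∃ F : MvPolynomial (Fin (n + 1)) ℂ,
      F.IsHomogeneous (n * (k - 1)) ∧
      (∀ Q ∈ Λ, Q ≠ P → VanishesAt F Q) ∧ ¬ VanishesAt F P := by
  classical
  intro P hP
  obtain ⟨c, hc, hcΛ⟩ := exists_generic Λ hfin
  have hdesc : ∀ s : ℕ, (∃ F : MvPolynomial (Fin (n + 1)) ℂ,
      F.IsHomogeneous (n * (k - 1) + s) ∧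
      (∀ Q ∈ Λ, Q ≠ P → VanishesAt F Q) ∧ ¬ VanishesAt F P) →
      ∃ F : MvPolynomial (Fin (n + 1)) ℂ,
      F.IsHomogeneous (n * (k - 1)) ∧
      (∀ Q ∈ Λ, Q ≠ P → VanishesAt F Q) ∧ ¬ VanishesAt F P := by
    intro s
    induction s with
    | zero => exact id
    | succ s ih =>
      rintro ⟨F, hF, hFQ, hFP⟩
      obtain ⟨g, hg, hgΛ⟩ := descend n k hk M hM Λ hΛ c hc hcΛ (n * (k - 1) + s) (by omega) F
        (by rw [show 1 + (n * (k - 1) + s) = n * (k - 1) + (s + 1) by ring]; exact hF)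
      refine ih ⟨g, hg, fun Q hQ hQP => ?_, fun h => hFP ?_⟩
      · have h1 := hFQ Q hQ hQP
        rw [VanishesAt, hgΛ Q hQ] at h1
        exact (mul_eq_zero.1 h1).resolve_left (hcΛ Q hQ)
      · rw [VanishesAt] at h ⊢
        rw [hgΛ P hP, h, mul_zero]
  have hsep : ∀ Q : ProjPt n, ∃ L : MvPolynomial (Fin (n + 1)) ℂ, L.IsHomogeneous 1 ∧
      (Q ≠ P → VanishesAt L Q ∧ ¬ VanishesAt L P) := by
    intro Q
    by_cases h : Q = P
    · exact ⟨X 0, isHomogeneous_X _ _, fun h' => absurd h h'⟩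
    · obtain ⟨L, h1, h2, h3⟩ := exists_sep P Q h
      exact ⟨L, h1, fun _ => ⟨h2, h3⟩⟩
  choose L hL1 hL2 using hsep
  let T := hfin.toFinset.erase P
  refine hdesc (∑ Q ∈ T, 1) ⟨linForm c ^ (n * (k - 1)) * ∏ Q ∈ T, L Q, ?_, ?_, ?_⟩
  · refine IsHomogeneous.mul ?_ (IsHomogeneous.prod _ _ _ fun Q _ => hL1 Q)
    simpa using (linForm_hom c).pow (n * (k - 1))
  · intro Q hQ hQP
    rw [VanishesAt, map_mul, map_prod]
    refine mul_eq_zero_of_right _ (Finset.prod_eq_zero (i := Q) ?_ (hL2 Q hQP).1)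
    exact Finset.mem_erase.2 ⟨hQP, hfin.mem_toFinset.2 hQ⟩
  · rw [VanishesAt, map_mul, map_prod, map_pow]
    refine mul_ne_zero (pow_ne_zero _ (hcΛ P hP)) (Finset.prod_ne_zero_iff.2 fun Q hQ => ?_)
    exact (hL2 Q (Finset.mem_erase.1 hQ).1).2
end
end

section
/- Let P_1,…,P_s be distinct points of ℙ²(ℂ) and let d ≥ 3 be an integer such that 6s ≤ d² + 9d + 10 and such that, for every integer t with 1 ≤ 2t ≤ d + 3 and every nonzero homogeneous polynomial C of degree t in ℂ[x_0,x_1,x_2], at most t(d+3−t) − 2 of the points P_1,…,P_s lie on the plane curve {C = 0}. Then the linear system of plane curves of degree d passing through P_1,…,P_s has no base points away from P_1,…,P_s: for every point Q ∈ ℙ²(ℂ) \ {P_1,…,P_s} there exists a homogeneous polynomial of degree d in ℂ[x_0,x_1,x_2] vanishing at each of P_1,…,P_s and not vanishing at Q. -/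
open MvPolynomial

noncomputable section

lemma psi_hom (P : MvPolynomial (Fin 3) ℂ) (n : ℕ) (h : P.IsHomogeneous n) :
    aeval (fun i => (Polynomial.C (X i) * Polynomial.X : Polynomial (MvPolynomial (Fin 3) ℂ))) P
      = Polynomial.C P * Polynomial.X ^ n := by
  conv_lhs => rw [P.as_sum]
  conv_rhs => rw [P.as_sum]
  rw [map_sum, map_sum, Finset.sum_mul]
  refine Finset.sum_congr rfl fun m hm => ?_
  have hdeg : m.degree = n := by
    by_contra hne
    exact (mem_support_iff.mp hm) (h.coeff_eq_zero hne)
  rw [aeval_monomial, monomial_eq]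
  simp only [Finsupp.prod, mul_pow, Finset.prod_mul_distrib]
  rw [Finset.prod_pow_eq_pow_sum, ← hdeg, Finsupp.degree_apply]
  rw [← Finset.prod_congr rfl (fun x _ => map_pow Polynomial.C (X x) (m x)), ← map_prod]
  simp [Polynomial.algebraMap_apply, mul_assoc, Polynomial.C_mul]

lemma psi_coeff (A : MvPolynomial (Fin 3) ℂ) (k : ℕ) :
    (aeval (fun i => (Polynomial.C (X i) * Polynomial.X : Polynomial (MvPolynomial (Fin 3) ℂ)))
      A).coeff k = homogeneousComponent k A := by
  conv_lhs => rw [← sum_homogeneousComponent A]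
  rw [map_sum, Polynomial.finsetSum_coeff]
  simp only [psi_hom _ _ (homogeneousComponent_isHomogeneous _ A), Polynomial.coeff_C_mul,
    Polynomial.coeff_X_pow]
  by_cases hk : k ∈ Finset.range (A.totalDegree + 1)
  · rw [Finset.sum_eq_single_of_mem k hk]
    · simp
    · intro b _ hb
      simp [hb.symm]
  · rw [homogeneousComponent_eq_zero]
    · refine Finset.sum_eq_zero fun b hb => ?_
      have : k ≠ b := by rintro rfl; exact hk hb
      simp [this]
    · simpa [Nat.lt_succ_iff] using hk

lemma hom_factor (A B : MvPolynomial (Fin 3) ℂ) (n : ℕ) (h : (A * B).IsHomogeneous n)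
    (h0 : A * B ≠ 0) : ∃ k, A.IsHomogeneous k := by
  have hA := left_ne_zero_of_mul h0
  have hB := right_ne_zero_of_mul h0
  set ψ := aeval (R := ℂ)
    (fun i => (Polynomial.C (X i) * Polynomial.X : Polynomial (MvPolynomial (Fin 3) ℂ))) with hψ
  have hmul : ψ A * ψ B = Polynomial.C (A * B) * Polynomial.X ^ n := by
    rw [← map_mul, hψ, psi_hom _ _ h]
  have hne : ψ A * ψ B ≠ 0 := by
    rw [hmul]
    exact mul_ne_zero (Polynomial.C_ne_zero.mpr h0) (pow_ne_zero _ Polynomial.X_ne_zero)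
  have ha := left_ne_zero_of_mul hne
  have hb := right_ne_zero_of_mul hne
  have e1 : (ψ A).natDegree + (ψ B).natDegree = n := by
    rw [← Polynomial.natDegree_mul ha hb, hmul, Polynomial.natDegree_C_mul_X_pow _ _ h0]
  have e2 : (ψ A).natTrailingDegree + (ψ B).natTrailingDegree = n := by
    rw [← Polynomial.natTrailingDegree_mul ha hb, hmul, Polynomial.C_mul_X_pow_eq_monomial,
      Polynomial.natTrailingDegree_monomial h0]
  have l1 := Polynomial.natTrailingDegree_le_natDegree (ψ A)
  have l2 := Polynomial.natTrailingDegree_le_natDegree (ψ B)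
  refine ⟨(ψ A).natDegree, ?_⟩
  have hz : ∀ j, j ≠ (ψ A).natDegree → homogeneousComponent j A = 0 := by
    intro j hj
    rw [← psi_coeff A j, ← hψ]
    rcases lt_or_gt_of_ne hj with h1 | h1
    · exact Polynomial.coeff_eq_zero_of_lt_natTrailingDegree (by omega)
    · exact Polynomial.coeff_eq_zero_of_natDegree_lt h1
  intro m hm
  by_contra hne'
  apply hm
  have := hz m.degree (by
    intro h; apply hne'; rw [← h, Finsupp.degree_eq_weight_one]; rfl)
  have h2 := congrArg (coeff m) this
  simpa [coeff_homogeneousComponent] using h2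

lemma hom_quot (F K : MvPolynomial (Fin 3) ℂ) (a j : ℕ) (hF : F.IsHomogeneous a) (hF0 : F ≠ 0)
    (h : (F * K).IsHomogeneous (a + j)) : K.IsHomogeneous j := by
  by_cases hK : K = 0
  · rw [hK]; exact isHomogeneous_zero _ _ _
  have h0 : F * K ≠ 0 := mul_ne_zero hF0 hK
  obtain ⟨k, hk⟩ := hom_factor K F (a + j) (by rwa [mul_comm]) (by rwa [mul_comm])
  have := (hF.mul hk).inj_right h h0
  have : k = j := by omega
  exact this ▸ hk

lemma finrank_hom (n : ℕ) :
    Module.finrank ℂ (homogeneousSubmodule (Fin 3) ℂ n) = (n + 2).choose 2 := by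
  rw [homogeneousSubmodule_eq_finsupp_supported]
  have hs : {d : Fin 3 →₀ ℕ | d.degree = n} = ↑(Finset.finsuppAntidiag (Finset.univ : Finset (Fin 3)) n) := by
    ext d
    simp [Finset.mem_finsuppAntidiag, Finsupp.degree_eq_sum]
  rw [hs]
  refine (AddMonoidAlgebra.supportedEquivFinsupp (S := ℂ) (R := ℂ) _).finrank_eq.trans ?_
  rw [Module.finrank_finsupp_self]
  rw [← Nat.card_eq_fintype_card, Nat.card_coe_set_eq, Set.ncard_coe_finset, Finset.card_finsuppAntidiag_nat_eq_choose]
  simp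
  rw [show 2 + n = n + 2 by omega]
  rw [Nat.choose_symm_add]

instance fin_hom (n : ℕ) : FiniteDimensional ℂ (homogeneousSubmodule (Fin 3) ℂ n) :=
  Module.Finite.iff_fg.mpr (homogeneousSubmodule_fg (Fin 3) ℂ n)

/-- evaluation of degree `n` forms at a family of vectors -/
def evL {ι : Type} (v : ι → Fin 3 → ℂ) (n : ℕ) :
    homogeneousSubmodule (Fin 3) ℂ n →ₗ[ℂ] (ι → ℂ) :=
  LinearMap.pi fun i => (aeval (R := ℂ) (v i)).toLinearMap ∘ₗ (homogeneousSubmodule (Fin 3) ℂ n).subtype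

lemma evL_apply {ι : Type} (v : ι → Fin 3 → ℂ) (n : ℕ) (P : homogeneousSubmodule (Fin 3) ℂ n)
    (i : ι) : evL v n P i = eval (v i) P.1 := by
  simp [evL, aeval_eq_eval]

lemma pairing {ι : Type} [Fintype ι] (v : ι → Fin 3 → ℂ) (l : ι → ℂ) (hl : ∀ i, l i ≠ 0) (m n : ℕ)
    (h : ∀ P : MvPolynomial (Fin 3) ℂ, P.IsHomogeneous (m + n) → ∑ i, l i * eval (v i) P = 0) :
    Module.finrank ℂ (LinearMap.range (evL v m)) + Module.finrank ℂ (LinearMap.range (evL v n))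
      ≤ Fintype.card ι := by
  classical
  let T : (ι → ℂ) →ₗ[ℂ] Module.Dual ℂ (ι → ℂ) :=
    { toFun := fun w => ∑ i, (l i * w i) • LinearMap.proj i
      map_add' := fun a b => by
        simp [mul_add, add_smul, Finset.sum_add_distrib]
      map_smul' := fun c a => by
        simp only [Pi.smul_apply, smul_eq_mul, RingHom.id_apply, Finset.smul_sum, smul_smul]
        refine Finset.sum_congr rfl fun i _ => ?_
        congr 1
        ring }
  have hT : ∀ w u, T w u = ∑ i, l i * w i * u i := by
    intro w u
    simp [T, LinearMap.sum_apply]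
  have hinj : Function.Injective T := by
    rw [← LinearMap.ker_eq_bot, LinearMap.ker_eq_bot']
    intro w hw
    ext j
    have := hT w (Pi.single j 1)
    rw [hw] at this
    simp [Pi.single_apply, hl j] at this
    simpa using this
  have hle : (LinearMap.range (evL v m)).map T ≤ (LinearMap.range (evL v n)).dualAnnihilator := by
    rintro _ ⟨_, ⟨P, rfl⟩, rfl⟩
    rw [Submodule.mem_dualAnnihilator]
    rintro _ ⟨R, rfl⟩
    rw [hT]
    have := h (P.1 * R.1) (IsHomogeneous.mul P.2 R.2)
    rw [← this]
    refine Finset.sum_congr rfl fun i _ => ?_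
    rw [evL_apply, evL_apply, map_mul, mul_assoc]
  have h1 := Submodule.finrank_mono hle
  rw [← (Submodule.equivMapOfInjective T hinj (LinearMap.range (evL v m))).finrank_eq] at h1
  have h2 := Subspace.finrank_add_finrank_dualAnnihilator_eq (LinearMap.range (evL v n))
  rw [Module.finrank_fintype_fun_eq_card] at h2
  omega

lemma sep_lin (z w : Fin 3 → ℂ) (hz : z ≠ 0) (hw : ∀ c : ℂ, w ≠ c • z) :
    ∃ L : MvPolynomial (Fin 3) ℂ, L.IsHomogeneous 1 ∧ eval z L = 0 ∧ eval w L ≠ 0 := by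
  obtain ⟨j, hj⟩ := Function.ne_iff.mp hz
  simp only [Pi.zero_apply] at hj
  by_contra hcon
  push Not at hcon
  refine hw (w j / z j) ?_
  ext i
  have h := hcon (C (z j) * X i - C (z i) * X j)
    ((isHomogeneous_C_mul_X _ _).sub (isHomogeneous_C_mul_X _ _)) (by simp; ring)
  simp at h
  simp
  field_simp
  linear_combination h

lemma sep_forms {ι : Type} [Fintype ι] (v : ι → Fin 3 → ℂ) (hv0 : ∀ i, v i ≠ 0)
    (hv : ∀ i j, i ≠ j → ∀ c : ℂ, v i ≠ c • v j) (i : ι) (e : ℕ) :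
    ∃ k P, P.IsHomogeneous (e + (k + 1)) ∧ eval (v i) P ≠ 0 ∧ ∀ j, j ≠ i → eval (v j) P = 0 := by
  classical
  have hL : ∀ j, ∃ L : MvPolynomial (Fin 3) ℂ, L.IsHomogeneous 1 ∧ (j ≠ i → eval (v j) L = 0)
      ∧ eval (v i) L ≠ 0 := by
    intro j
    by_cases hj : j = i
    · obtain ⟨a, ha⟩ := Function.ne_iff.mp (hv0 i)
      exact ⟨X a, isHomogeneous_X _ _, fun h => absurd hj h, by simpa using ha⟩
    · obtain ⟨L, h1, h2, h3⟩ := sep_lin (v j) (v i) (hv0 j) (hv i j (Ne.symm hj))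
      exact ⟨L, h1, fun _ => h2, h3⟩
  choose L hL1 hL2 hL3 using hL
  refine ⟨Fintype.card ι, (L i) ^ (e + 1) * ∏ j, L j, ?_, ?_, ?_⟩
  · have h1 := (hL1 i).pow (e + 1)
    have h2 := IsHomogeneous.prod Finset.univ L (fun _ => 1) (fun j _ => hL1 j)
    have h3 := h1.mul h2
    simp only [Finset.sum_const, Finset.card_univ, smul_eq_mul] at h3
    convert h3 using 1
    ring
  · rw [map_mul, map_pow, map_prod]
    exact mul_ne_zero (pow_ne_zero _ (hL3 i)) (Finset.prod_ne_zero_iff.mpr fun j _ => hL3 j)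
  · intro j hj
    rw [map_mul, map_prod, Finset.prod_eq_zero (Finset.mem_univ j) (hL2 j hj), mul_zero]

/-- Property: multiplication by a linear form is onto modulo `(F,G)` in large degree. -/
def GoodLine (F G : MvPolynomial (Fin 3) ℂ) (a b : ℕ) : Prop :=
  ∃ L : MvPolynomial (Fin 3) ℂ, L.IsHomogeneous 1 ∧ ∀ n, a + b ≤ n + 2 →
    ∀ P : MvPolynomial (Fin 3) ℂ, P.IsHomogeneous (n + 1) →
      ∃ Q U V : MvPolynomial (Fin 3) ℂ, Q.IsHomogeneous n ∧ P = L * Q + F * U + G * V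

lemma ci_of_good {ι : Type} [Fintype ι] (v : ι → Fin 3 → ℂ) (hv0 : ∀ i, v i ≠ 0)
    (hv : ∀ i j, i ≠ j → ∀ c : ℂ, v i ≠ c • v j) (F G : MvPolynomial (Fin 3) ℂ) (a b e : ℕ)
    (hg : GoodLine F G a b) (hab : a + b ≤ e + 2) (hF : ∀ i, eval (v i) F = 0)
    (hG : ∀ i, eval (v i) G = 0) (l : ι → ℂ)
    (h : ∀ P : MvPolynomial (Fin 3) ℂ, P.IsHomogeneous e → ∑ i, l i * eval (v i) P = 0) :
    ∀ i, l i = 0 := by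
  obtain ⟨L, hL, hred⟩ := hg
  have key : ∀ k, ∀ P : MvPolynomial (Fin 3) ℂ, P.IsHomogeneous (e + k) →
      ∃ Q : MvPolynomial (Fin 3) ℂ, Q.IsHomogeneous e ∧
        ∀ i, eval (v i) P = eval (v i) L ^ k * eval (v i) Q := by
    intro k
    induction k with
    | zero => intro P hP; exact ⟨P, hP, fun i => by simp⟩
    | succ k ih =>
      intro P hP
      obtain ⟨Q, U, V, hQ, hPQ⟩ := hred (e + k) (by omega) P hP
      obtain ⟨Q', hQ', hQQ⟩ := ih Q hQ
      refine ⟨Q', hQ', fun i => ?_⟩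
      rw [hPQ]
      simp only [map_add, map_mul, hF i, hG i, hQQ i]
      ring
  have hLne : ∀ i, eval (v i) L ≠ 0 := by
    intro i h0
    obtain ⟨k, P, hP, h1, -⟩ := sep_forms v hv0 hv i e
    obtain ⟨Q, -, hQ⟩ := key (k + 1) P hP
    apply h1
    rw [hQ i, h0]
    simp
  intro i
  obtain ⟨k, P, hP, h1, h2⟩ := sep_forms v hv0 hv i e
  obtain ⟨Q, hQh, hQ⟩ := key (k + 1) P hP
  have hs := h Q hQh
  rw [Finset.sum_eq_single i] at hs
  · rcases mul_eq_zero.mp hs with h3 | h3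
    · exact h3
    · exact absurd (by rw [hQ i, h3, mul_zero]) h1
  · intro j _ hj
    have := h2 j hj
    rw [hQ j] at this
    rcases mul_eq_zero.mp this with h3 | h3
    · exact absurd h3 (pow_ne_zero _ (hLne j))
    · rw [h3, mul_zero]
  · intro hi
    exact absurd (Finset.mem_univ i) hi

/-- restriction to the line through `(1,0,0)` and `(0,1,0)` -/
def rest : MvPolynomial (Fin 3) ℂ →ₐ[ℂ] Polynomial ℂ :=
  aeval ![Polynomial.X, 1, 0]

lemma rest_sum (P : MvPolynomial (Fin 3) ℂ) :
    rest P = ∑ m ∈ P.support, if m 2 = 0 then Polynomial.monomial (m 0) (coeff m P) else 0 := by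
  conv_lhs => rw [P.as_sum]
  rw [map_sum]
  refine Finset.sum_congr rfl fun m _ => ?_
  rw [rest, aeval_monomial, Finsupp.prod_fintype _ _ (by simp), Fin.prod_univ_three]
  by_cases h : m 2 = 0
  · simp [h, Polynomial.C_mul_X_pow_eq_monomial]
  · simp [h]

lemma deg3 (m : Fin 3 →₀ ℕ) : m.degree = m 0 + m 1 + m 2 := by
  rw [Finsupp.degree_eq_sum, Fin.sum_univ_three]

lemma deg_of_supp {P : MvPolynomial (Fin 3) ℂ} {n : ℕ} (hP : P.IsHomogeneous n) {m : Fin 3 →₀ ℕ}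
    (hm : m ∈ P.support) : m 0 + m 1 + m 2 = n := by
  rw [← deg3]
  by_contra hne
  exact (mem_support_iff.mp hm) (hP.coeff_eq_zero hne)

lemma rest_natDegree {P : MvPolynomial (Fin 3) ℂ} {n : ℕ} (hP : P.IsHomogeneous n) :
    (rest P).natDegree ≤ n := by
  rw [rest_sum]
  refine Polynomial.natDegree_sum_le_of_forall_le _ _ fun m hm => ?_
  have := deg_of_supp hP hm
  split_ifs
  · exact (Polynomial.natDegree_monomial_le _).trans (by omega)
  · simp

lemma rest_coeff {P : MvPolynomial (Fin 3) ℂ} {n : ℕ} (hP : P.IsHomogeneous n) (m : Fin 3 →₀ ℕ)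
    (hm : m.degree = n) (h2 : m 2 = 0) : (rest P).coeff (m 0) = coeff m P := by
  rw [rest_sum, Polynomial.finsetSum_coeff, Finset.sum_eq_single m]
  · simp [h2]
  · intro k hk hkm
    have := deg_of_supp hP hk
    rw [deg3] at hm
    split_ifs with h
    · rw [Polynomial.coeff_monomial, if_neg]
      intro h0
      apply hkm
      ext i
      fin_cases i <;> simp <;> omega
    · simp
  · intro h
    rw [notMem_support_iff.mp h]
    simp

lemma eval_e0 {P : MvPolynomial (Fin 3) ℂ} {n : ℕ} (hP : P.IsHomogeneous n) :
    eval ![1, 0, 0] P = coeff (Finsupp.single 0 n) P := by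
  rw [eval_eq', Finset.sum_eq_single (Finsupp.single 0 n)]
  · simp [Fin.prod_univ_three]
  · intro k hk hkm
    have := deg_of_supp hP hk
    rw [Fin.prod_univ_three]
    by_cases h1 : k 1 = 0
    · by_cases h2 : k 2 = 0
      · exfalso
        apply hkm
        ext i
        fin_cases i <;> simp <;> omega
      · simp [h2]
    · simp [h1]
  · intro h
    rw [notMem_support_iff.mp h]
    simp

lemma rest_surj (u : Polynomial ℂ) (n : ℕ) (hu : u.natDegree ≤ n) :
    ∃ U : MvPolynomial (Fin 3) ℂ, U.IsHomogeneous n ∧ rest U = u := by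
  refine ⟨∑ i ∈ Finset.range (n + 1), C (u.coeff i) * (X 0 ^ i * X 1 ^ (n - i)), ?_, ?_⟩
  · refine IsHomogeneous.sum _ _ _ fun i hi => ?_
    refine IsHomogeneous.C_mul ?_ _
    have h := (isHomogeneous_X_pow (R := ℂ) (0 : Fin 3) i).mul
      (isHomogeneous_X_pow (R := ℂ) (1 : Fin 3) (n - i))
    have : i + (n - i) = n := by
      have := Finset.mem_range.mp hi
      omega
    rwa [this] at h
  · conv_rhs => rw [u.as_sum_range_C_mul_X_pow' (Nat.lt_succ_of_le hu)]
    rw [map_sum]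
    refine Finset.sum_congr rfl fun i _ => ?_
    simp [rest, ← algebraMap_eq]

lemma rest_ker {R : MvPolynomial (Fin 3) ℂ} {n : ℕ} (hR : R.IsHomogeneous (n + 1))
    (h : rest R = 0) : ∃ Q : MvPolynomial (Fin 3) ℂ, Q.IsHomogeneous n ∧ R = X 2 * Q := by
  have hd : (X 2 : MvPolynomial (Fin 3) ℂ) ∣ R := by
    rw [X_dvd_iff_modMonomial_eq_zero]
    ext m
    rw [coeff_zero]
    by_cases hm : Finsupp.single 2 1 ≤ m
    · rw [coeff_modMonomial_of_le _ hm]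
    · rw [coeff_modMonomial_of_not_le _ hm]
      have h2 : m 2 = 0 := by
        by_contra h0
        apply hm
        rw [Finsupp.single_le_iff]
        omega
      by_cases hdeg : m.degree = n + 1
      · rw [← rest_coeff hR m hdeg h2, h, Polynomial.coeff_zero]
      · exact hR.coeff_eq_zero hdeg
  obtain ⟨Q, rfl⟩ := hd
  refine ⟨Q, hom_quot (X 2) Q 1 n (isHomogeneous_X _ _) (X_ne_zero _) ?_, rfl⟩
  rwa [add_comm]

lemma good_of_coprime (F G : MvPolynomial (Fin 3) ℂ) (a b : ℕ) (ha : 1 ≤ a)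
    (hF : F.IsHomogeneous a) (hG : G.IsHomogeneous b) (hF0 : eval ![1, 0, 0] F ≠ 0)
    (hco : IsCoprime (rest F) (rest G)) : GoodLine F G a b := by
  refine ⟨X 2, isHomogeneous_X _ _, fun n hn P hP => ?_⟩
  have hca : (rest F).coeff a ≠ 0 := by
    have := rest_coeff hF (Finsupp.single 0 a) (by simp) (by simp)
    simp only [Finsupp.single_eq_same] at this
    rwa [this, ← eval_e0 hF]
  have hfd : (rest F).natDegree = a :=
    le_antisymm (rest_natDegree hF) (Polynomial.le_natDegree_of_ne_zero hca)
  have hf0 : rest F ≠ 0 := by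
    intro h; rw [h] at hca; simp at hca
  obtain ⟨s, t, hst⟩ := hco
  set f := rest F
  set g := rest G
  set p := rest P
  set w := (p * t) % f with hw
  set u := p * s + g * ((p * t) / f) with hu
  have hp : p = f * u + g * w := by
    have h1 : f * ((p * t) / f) + w = p * t := EuclideanDomain.div_add_mod _ _
    have h2 : p = p * s * f + g * (p * t) := by linear_combination (-p) * hst
    rw [← h1] at h2
    rw [hu]
    linear_combination h2
  have hwd : w.natDegree < a := by
    rw [← hfd]
    exact Polynomial.natDegree_mod_lt _ (by omega)
  have hgw : (g * w).natDegree ≤ n + 1 := by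
    refine Polynomial.natDegree_mul_le.trans ?_
    have : g.natDegree ≤ b := rest_natDegree hG
    omega
  have hfu : (f * u).natDegree ≤ n + 1 := by
    have : f * u = p - g * w := by rw [hp]; ring
    rw [this]
    refine (Polynomial.natDegree_sub_le _ _).trans (max_le (rest_natDegree hP) hgw)
  have hU : ∃ U : MvPolynomial (Fin 3) ℂ, (F * U).IsHomogeneous (n + 1) ∧ rest U = u := by
    by_cases hu0 : u = 0
    · exact ⟨0, by rw [mul_zero]; exact isHomogeneous_zero _ _ _, by rw [hu0, map_zero]⟩
    · rw [Polynomial.natDegree_mul hf0 hu0, hfd] at hfu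
      obtain ⟨U, hU1, hU2⟩ := rest_surj u (n + 1 - a) (by omega)
      refine ⟨U, ?_, hU2⟩
      have := hF.mul hU1
      rwa [show a + (n + 1 - a) = n + 1 by omega] at this
  have hV : ∃ V : MvPolynomial (Fin 3) ℂ, (G * V).IsHomogeneous (n + 1) ∧ rest V = w := by
    obtain ⟨V, hV1, hV2⟩ := rest_surj w (n + 1 - b) (by omega)
    refine ⟨V, ?_, hV2⟩
    have := hG.mul hV1
    rwa [show b + (n + 1 - b) = n + 1 by omega] at this
  obtain ⟨U, hU1, hU2⟩ := hU
  obtain ⟨V, hV1, hV2⟩ := hV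
  obtain ⟨Q, hQ, hR⟩ := rest_ker (R := P - F * U - G * V) ((hP.sub hU1).sub hV1) (by
    rw [map_sub, map_sub, map_mul, map_mul, hU2, hV2]
    change p - f * u - g * w = 0
    rw [hp]; ring)
  exact ⟨Q, U, V, hQ, by rw [← hR]; ring⟩

/-- linear change of coordinates -/
def cc (M : Matrix (Fin 3) (Fin 3) ℂ) : MvPolynomial (Fin 3) ℂ →ₐ[ℂ] MvPolynomial (Fin 3) ℂ :=
  aeval fun i => ∑ j, C (M i j) * X j

lemma cc_hom (M : Matrix (Fin 3) (Fin 3) ℂ) {P : MvPolynomial (Fin 3) ℂ} {n : ℕ}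
    (hP : P.IsHomogeneous n) : (cc M P).IsHomogeneous n := by
  have := hP.aeval (fun i => ∑ j, C (M i j) * X j) (n := 1)
    (fun i => IsHomogeneous.sum _ _ _ fun j _ => isHomogeneous_C_mul_X _ _)
  rwa [one_mul] at this

lemma cc_eval (M : Matrix (Fin 3) (Fin 3) ℂ) (v : Fin 3 → ℂ) (P : MvPolynomial (Fin 3) ℂ) :
    eval v (cc M P) = eval (M.mulVec v) P := by
  have : (aeval v).comp (cc M) = aeval (R := ℂ) (M.mulVec v) := by
    ext i
    simp [cc, Matrix.mulVec, dotProduct]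
  have := DFunLike.congr_fun this P
  simpa [aeval_eq_eval] using this

lemma cc_cc (M N : Matrix (Fin 3) (Fin 3) ℂ) (h : N * M = 1) (P : MvPolynomial (Fin 3) ℂ) :
    cc M (cc N P) = P := by
  have : (cc M).comp (cc N) = AlgHom.id ℂ _ := by
    refine MvPolynomial.algHom_ext fun i => ?_
    have h1 : cc M (cc N (X i)) = ∑ k, C ((N * M) i k) * X k := by
      simp only [cc, aeval_X, map_sum, map_mul, Matrix.mul_apply, algHom_C, Finset.mul_sum,
        Finset.sum_mul, algebraMap_eq]
      rw [Finset.sum_comm]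
      simp only [mul_assoc]
    rw [AlgHom.comp_apply, h1, h]
    simp [Matrix.one_apply]
  exact DFunLike.congr_fun this P

lemma good_cc (M N : Matrix (Fin 3) (Fin 3) ℂ) (h : M * N = 1) (F G : MvPolynomial (Fin 3) ℂ)
    (a b : ℕ) (hg : GoodLine (cc M F) (cc M G) a b) : GoodLine F G a b := by
  obtain ⟨L, hL, hred⟩ := hg
  refine ⟨cc N L, cc_hom N hL, fun n hn P hP => ?_⟩
  obtain ⟨Q, U, V, hQ, hPQ⟩ := hred n hn (cc M P) (cc_hom M hP)
  refine ⟨cc N Q, cc N U, cc N V, cc_hom N hQ, ?_⟩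
  have := congrArg (cc N) hPQ
  simpa only [map_add, map_mul, cc_cc N M h] using this

lemma relprime_cc (M N : Matrix (Fin 3) (Fin 3) ℂ) (h : M * N = 1) (F G : MvPolynomial (Fin 3) ℂ)
    (hr : IsRelPrime F G) : IsRelPrime (cc M F) (cc M G) := by
  intro D h1 h2
  have h1' := map_dvd (cc N) h1
  have h2' := map_dvd (cc N) h2
  rw [cc_cc N M h] at h1' h2'
  have := (hr h1' h2').map (cc M)
  rwa [cc_cc M N (mul_eq_one_comm.mp h)] at this

lemma elim (F G : MvPolynomial (Fin 3) ℂ) (a : ℕ) (hF : F.IsHomogeneous a)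
    (hF0 : eval ![1, 0, 0] F ≠ 0) (hr : IsRelPrime F G) :
    ∃ (r : MvPolynomial (Fin 2) ℂ) (x y : Polynomial (MvPolynomial (Fin 2) ℂ)), r ≠ 0 ∧
      Polynomial.C r = finSuccEquiv ℂ 2 F * x + finSuccEquiv ℂ 2 G * y := by
  set Ft := finSuccEquiv ℂ 2 F with hFt
  set Gt := finSuccEquiv ℂ 2 G with hGt
  have hrt : IsRelPrime Ft Gt := by
    intro D h1 h2
    have h1' := map_dvd (finSuccEquiv ℂ 2).symm h1
    have h2' := map_dvd (finSuccEquiv ℂ 2).symm h2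
    rw [hFt, AlgEquiv.symm_apply_apply] at h1'
    rw [hGt, AlgEquiv.symm_apply_apply] at h2'
    have := (hr h1' h2').map (finSuccEquiv ℂ 2)
    rwa [AlgEquiv.apply_symm_apply] at this
  have hc : Ft.coeff a = C (eval ![1, 0, 0] F) := by
    have h0 : (Ft.coeff a).IsHomogeneous 0 := hF.finSuccEquiv_coeff_isHomogeneous a 0 (by simp)
    rw [← totalDegree_zero_iff_isHomogeneous, totalDegree_eq_zero_iff_eq_C] at h0
    rw [h0, eval_e0 hF, hFt, finSuccEquiv_coeff_coeff]
    congr 2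
    ext i
    refine Fin.cases ?_ (fun j => ?_) i
    · simp
    · simp [Finsupp.cons_succ]
  have hdeg : Ft.natDegree ≤ a := by
    rw [hFt, natDegree_finSuccEquiv]
    exact (degreeOf_le_totalDegree _ _).trans hF.totalDegree_le
  set c := eval ![1, 0, 0] F
  set Fm := Ft * Polynomial.C (C c⁻¹) with hFm
  have hunit : IsUnit (Polynomial.C (C c⁻¹ : MvPolynomial (Fin 2) ℂ)) :=
    ((IsUnit.mk0 _ (inv_ne_zero hF0)).map C).map Polynomial.C
  have hmonic : Fm.Monic := by
    refine Polynomial.monic_of_natDegree_le_of_coeff_eq_one a ?_ ?_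
    · exact (Polynomial.natDegree_mul_C_le _ _).trans hdeg
    · rw [hFm, Polynomial.coeff_mul_C, hc, ← C_mul, mul_inv_cancel₀ hF0, C_1]
  have hrm : IsRelPrime Fm Gt := by
    intro D h1 h2
    exact hrt ((hunit.dvd_mul_right).mp h1) h2
  have := hmonic.finite_adjoinRoot
  have hint : Algebra.IsIntegral (MvPolynomial (Fin 2) ℂ) (AdjoinRoot Fm) := inferInstance
  have halg : IsAlgebraic (MvPolynomial (Fin 2) ℂ) (AdjoinRoot.mk Fm Gt) :=
    (hint.isIntegral _).isAlgebraic
  have hnzd : AdjoinRoot.mk Fm Gt ∈ nonZeroDivisors (AdjoinRoot Fm) := by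
    rw [mem_nonZeroDivisors_iff_right]
    intro x hx
    obtain ⟨x, rfl⟩ := AdjoinRoot.mk_surjective x
    rw [← map_mul, AdjoinRoot.mk_eq_zero] at hx
    rw [AdjoinRoot.mk_eq_zero]
    exact hrm.dvd_of_dvd_mul_right hx
  obtain ⟨r, hr0, y, hy⟩ := halg.exists_nonzero_dvd hnzd
  obtain ⟨y, rfl⟩ := AdjoinRoot.mk_surjective y
  have h1 : AdjoinRoot.mk Fm (Polynomial.C r) = AdjoinRoot.mk Fm (Gt * y) := by
    rw [map_mul, ← hy]
    rfl
  rw [AdjoinRoot.mk_eq_mk] at h1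
  obtain ⟨x, hx⟩ := h1
  refine ⟨r, Polynomial.C (C c⁻¹) * x, y, hr0, ?_⟩
  rw [← mul_assoc, ← hFm, ← hx]
  ring

lemma good_of_relprime (F G : MvPolynomial (Fin 3) ℂ) (a b : ℕ) (ha : 1 ≤ a)
    (hF : F.IsHomogeneous a) (hG : G.IsHomogeneous b) (hF0 : F ≠ 0)
    (hr : IsRelPrime F G) : GoodLine F G a b := by
  -- first reduce to the case where `F` does not vanish at `(1,0,0)`
  have step : ∀ F G : MvPolynomial (Fin 3) ℂ, F.IsHomogeneous a → G.IsHomogeneous b →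
      eval ![1, 0, 0] F ≠ 0 → IsRelPrime F G → GoodLine F G a b := by
    intro F G hF hG hF0 hr
    obtain ⟨r, x, y, hr0, hxy⟩ := elim F G a hF hF0 hr
    have hne : r * X 0 ≠ 0 := mul_ne_zero hr0 (X_ne_zero _)
    obtain ⟨q, hq⟩ : ∃ q, eval q (r * X 0) ≠ 0 := by
      by_contra hcon
      push Not at hcon
      exact hne (MvPolynomial.funext fun q => by rw [hcon q, map_zero])
    rw [map_mul, eval_X] at hq
    have hq0 := right_ne_zero_of_mul hq
    have hq1 := left_ne_zero_of_mul hq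
    set M : Matrix (Fin 3) (Fin 3) ℂ := !![1, 0, 0; 0, q 0, 0; 0, q 1, 1] with hM
    set N : Matrix (Fin 3) (Fin 3) ℂ := !![1, 0, 0; 0, (q 0)⁻¹, 0; 0, -(q 1) * (q 0)⁻¹, 1] with hN
    have hMN : M * N = 1 := by
      ext i j
      fin_cases i <;> fin_cases j <;> simp [hM, hN, Matrix.mul_apply, Fin.sum_univ_three, hq0]
    refine good_cc M N hMN F G a b ?_
    refine good_of_coprime _ _ a b ha (cc_hom M hF) (cc_hom M hG) ?_ ?_
    · rw [cc_eval]
      convert hF0 using 3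
      ext i
      fin_cases i <;> simp [hM, Matrix.mulVec, dotProduct, Fin.sum_univ_three]
    · let θ : Polynomial (MvPolynomial (Fin 2) ℂ) →ₐ[ℂ] Polynomial ℂ :=
        Polynomial.mapAlgHom (aeval q)
      have hθ : ∀ P, rest (cc M P) = θ (finSuccEquiv ℂ 2 P) := by
        intro P
        have : rest.comp (cc M) = θ.comp (finSuccEquiv ℂ 2).toAlgHom := by
          refine MvPolynomial.algHom_ext fun i => ?_
          fin_cases i
          · simp [rest, cc, θ, hM, Fin.sum_univ_three, finSuccEquiv_X_zero]
          · have := finSuccEquiv_X_succ (R := ℂ) (n := 2) (j := 0)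
            simp only [Fin.succ_zero_eq_one] at this
            simp [rest, cc, θ, hM, Fin.sum_univ_three, this, ← algebraMap_eq]
          · have := finSuccEquiv_X_succ (R := ℂ) (n := 2) (j := 1)
            simp only [Fin.succ_one_eq_two] at this
            simp [rest, cc, θ, hM, Fin.sum_univ_three, this, ← algebraMap_eq]
        exact DFunLike.congr_fun this P
      have h1 := congrArg θ hxy
      rw [map_add, map_mul, map_mul, ← hθ, ← hθ] at h1
      have h2 : θ (Polynomial.C r) = Polynomial.C (eval q r) := by
        simp [θ]
      rw [h2] at h1
      refine ⟨Polynomial.C (eval q r)⁻¹ * θ x, Polynomial.C (eval q r)⁻¹ * θ y, ?_⟩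
      have h3 : Polynomial.C (eval q r)⁻¹ * Polynomial.C (eval q r) = (1 : Polynomial ℂ) := by
        rw [← Polynomial.C_mul, inv_mul_cancel₀ hq1, Polynomial.C_1]
      rw [← h3, h1]
      ring
  have hne : F * X 0 ≠ 0 := mul_ne_zero hF0 (X_ne_zero _)
  obtain ⟨p, hp⟩ : ∃ q, eval q (F * X 0) ≠ 0 := by
    by_contra hcon
    push Not at hcon
    exact hne (MvPolynomial.funext fun q => by rw [hcon q, map_zero])
  rw [map_mul, eval_X] at hp
  have hp0 := right_ne_zero_of_mul hp
  have hp1 := left_ne_zero_of_mul hp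
  set M : Matrix (Fin 3) (Fin 3) ℂ := !![p 0, 0, 0; p 1, 1, 0; p 2, 0, 1] with hM
  set N : Matrix (Fin 3) (Fin 3) ℂ :=
    !![(p 0)⁻¹, 0, 0; -(p 1) * (p 0)⁻¹, 1, 0; -(p 2) * (p 0)⁻¹, 0, 1] with hN
  have hMN : M * N = 1 := by
    ext i j
    fin_cases i <;> fin_cases j <;> simp [hM, hN, Matrix.mul_apply, Fin.sum_univ_three, hp0]
  refine good_cc M N hMN F G a b (step _ _ (cc_hom M hF) (cc_hom M hG) ?_ (relprime_cc M N hMN F G hr))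
  rw [cc_eval]
  convert hp1 using 3
  ext i
  fin_cases i <;> simp [hM, Matrix.mulVec, dotProduct, Fin.sum_univ_three]

lemma two_choose (n : ℕ) : 2 * (n + 2).choose 2 = (n + 2) * (n + 1) := by
  induction n with
  | zero => rfl
  | succ k ih =>
    rw [Nat.choose_succ_succ' (k + 2) 1, Nat.choose_one_right, mul_add, ih]
    ring

lemma dvd_of_min {ι : Type} [Fintype ι] (v : ι → Fin 3 → ℂ) (hv0 : ∀ i, v i ≠ 0)
    (hv : ∀ i j, i ≠ j → ∀ c : ℂ, v i ≠ c • v j) (l : ι → ℂ) (hl : ∀ i, l i ≠ 0) (d t : ℕ)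
    (h : ∀ P : MvPolynomial (Fin 3) ℂ, P.IsHomogeneous d → ∑ i, l i * eval (v i) P = 0)
    (ht : 2 * t ≤ d + 3)
    (hmin : ∀ k, k < t → ∀ P : MvPolynomial (Fin 3) ℂ, P.IsHomogeneous k →
      (∀ i, eval (v i) P = 0) → P = 0)
    (F : MvPolynomial (Fin 3) ℂ) (hF : F.IsHomogeneous t) (hF0 : F ≠ 0)
    (hFv : ∀ i, eval (v i) F = 0) (G : MvPolynomial (Fin 3) ℂ)
    (hG : G.IsHomogeneous (d + 1 - t)) (hGv : ∀ i, eval (v i) G = 0) : F ∣ G := by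
  classical
  by_cases hG0 : G = 0
  · rw [hG0]; exact dvd_zero _
  by_contra hnd
  obtain ⟨F', G', H, hrel, hHF, hHG⟩ := UniqueFactorizationMonoid.exists_reduced_factors F hF0 G
  obtain ⟨k, hk⟩ := hom_factor H F' t (hHF ▸ hF) (hHF ▸ hF0)
  obtain ⟨a, ha⟩ := hom_factor F' H t (by rw [mul_comm, hHF]; exact hF)
    (by rw [mul_comm, hHF]; exact hF0)
  obtain ⟨b, hb⟩ := hom_factor G' H (d + 1 - t) (by rw [mul_comm, hHG]; exact hG)
    (by rw [mul_comm, hHG]; exact hG0)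
  have e1 : k + a = t := (hk.mul ha).inj_right (hHF ▸ hF) (hHF ▸ hF0)
  have e2 : k + b = d + 1 - t := (hk.mul hb).inj_right (hHG ▸ hG) (hHG ▸ hG0)
  have hF'0 : F' ≠ 0 := by rintro rfl; exact hF0 (by rw [← hHF, mul_zero])
  have hH0 : H ≠ 0 := by rintro rfl; exact hF0 (by rw [← hHF, zero_mul])
  have ha1 : 1 ≤ a := by
    by_contra ha0
    have ha0 : a = 0 := by omega
    subst ha0
    rw [← totalDegree_zero_iff_isHomogeneous, totalDegree_eq_zero_iff_eq_C] at ha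
    have hu : IsUnit F' := by
      rw [ha]
      refine (IsUnit.mk0 _ ?_).map C
      intro h0
      rw [h0, C_0] at ha
      exact hF'0 ha
    apply hnd
    rw [← hHF, ← hHG]
    exact (hu.mul_right_dvd).mpr (dvd_mul_right _ _)
  have hex : ∃ i, eval (v i) H ≠ 0 := by
    by_contra hcon
    push Not at hcon
    exact hH0 (hmin k (by omega) H hk hcon)
  obtain ⟨i₀, hi₀⟩ := hex
  have hgood := good_of_relprime F' G' a b ha1 ha hb hF'0 hrel
  have := ci_of_good (ι := {i // eval (v i) H ≠ 0}) (fun i => v i.1) (fun i => hv0 i.1)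
    (fun i j hij => hv i.1 j.1 (fun h => hij (Subtype.ext h))) F' G' a b (d - k) hgood (by omega)
    (fun i => by
      have := hFv i.1
      rw [← hHF, map_mul] at this
      exact (mul_eq_zero.mp this).resolve_left i.2)
    (fun i => by
      have := hGv i.1
      rw [← hHG, map_mul] at this
      exact (mul_eq_zero.mp this).resolve_left i.2)
    (fun i => l i.1 * eval (v i.1) H)
    (fun P hP => by
      have h1 := h (H * P) (by
        have := hk.mul hP
        rwa [show k + (d - k) = d by omega] at this)
      rw [← Fintype.sum_subtype_add_sum_subtype (fun i => eval (v i) H ≠ 0)] at h1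
      have h2 : ∑ i : {i // ¬ (eval (v i) H ≠ 0)}, l i.1 * eval (v i.1) (H * P) = 0 := by
        refine Finset.sum_eq_zero fun i _ => ?_
        have := not_not.mp i.2
        rw [map_mul, this]
        ring
      rw [h2, add_zero] at h1
      refine Eq.trans ?_ h1
      refine Fintype.sum_congr _ _ fun i => ?_
      rw [map_mul, mul_assoc])
    ⟨i₀, hi₀⟩
  exact mul_ne_zero (hl i₀) hi₀ this

lemma range_of_inj {ι : Type} (v : ι → Fin 3 → ℂ) (n : ℕ)
    (h : ∀ P : MvPolynomial (Fin 3) ℂ, P.IsHomogeneous n → (∀ i, eval (v i) P = 0) → P = 0) :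
    2 * Module.finrank ℂ (LinearMap.range (evL v n)) = (n + 2) * (n + 1) := by
  have hinj : Function.Injective (evL v n) := by
    rw [← LinearMap.ker_eq_bot, LinearMap.ker_eq_bot']
    intro P hP
    refine Subtype.ext (h P.1 P.2 fun i => ?_)
    rw [← evL_apply, hP]
    rfl
  rw [LinearMap.finrank_range_of_inj hinj, finrank_hom, two_choose]

lemma range_of_dvd {ι : Type} (v : ι → Fin 3 → ℂ) (n t : ℕ)
    (F : MvPolynomial (Fin 3) ℂ) (hF : F.IsHomogeneous t) (hF0 : F ≠ 0)
    (h : ∀ P : MvPolynomial (Fin 3) ℂ, P.IsHomogeneous (t + n) → (∀ i, eval (v i) P = 0) → F ∣ P) :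
    (t + n + 2) * (t + n + 1) ≤
      2 * Module.finrank ℂ (LinearMap.range (evL v (t + n))) + (n + 2) * (n + 1) := by
  have h1 := LinearMap.finrank_range_add_finrank_ker (evL v (t + n))
  rw [finrank_hom] at h1
  have h2 := two_choose (t + n)
  have h3 := two_choose n
  have hle : (LinearMap.ker (evL v (t + n))).map (homogeneousSubmodule (Fin 3) ℂ (t + n)).subtype
      ≤ (homogeneousSubmodule (Fin 3) ℂ n).map (LinearMap.mulLeft ℂ F) := by
    rintro _ ⟨P, hP, rfl⟩
    obtain ⟨K, hK⟩ := h P.1 P.2 (fun i => by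
      rw [← evL_apply, LinearMap.mem_ker.mp hP]; rfl)
    refine ⟨K, ?_, ?_⟩
    · refine hom_quot F K t n hF hF0 ?_
      rw [← hK]
      exact P.2
    · simp [hK]
  have h4 := Submodule.finrank_mono hle
  rw [← (Submodule.equivMapOfInjective _ (Submodule.injective_subtype _)
    (LinearMap.ker (evL v (t + n)))).finrank_eq] at h4
  have h5 := Submodule.finrank_map_le (LinearMap.mulLeft ℂ F) (homogeneousSubmodule (Fin 3) ℂ n)
  rw [finrank_hom] at h5
  omega

theorem main_rel {ι : Type} [Fintype ι] [Nonempty ι] (v : ι → Fin 3 → ℂ) (hv0 : ∀ i, v i ≠ 0)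
    (hv : ∀ i j, i ≠ j → ∀ c : ℂ, v i ≠ c • v j) (l : ι → ℂ) (hl : ∀ i, l i ≠ 0) (d : ℕ)
    (h : ∀ P : MvPolynomial (Fin 3) ℂ, P.IsHomogeneous d → ∑ i, l i * eval (v i) P = 0) :
    ∃ t : ℕ, 1 ≤ t ∧ 2 * t ≤ d + 3 ∧ t * (d + 3) ≤ Fintype.card ι + t * t ∧
      ((∃ F : MvPolynomial (Fin 3) ℂ, F ≠ 0 ∧ F.IsHomogeneous t ∧ ∀ i, eval (v i) F = 0) ∨
        d + 2 ≤ 2 * t) := by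
  classical
  by_cases hex : ∃ t : ℕ, 2 * t ≤ d + 3 ∧
      ∃ F : MvPolynomial (Fin 3) ℂ, F ≠ 0 ∧ F.IsHomogeneous t ∧ ∀ i, eval (v i) F = 0
  · obtain ⟨t, ⟨ht, F, hF0, hF, hFv⟩, hmin'⟩ :
        ∃ t : ℕ, (2 * t ≤ d + 3 ∧ ∃ F : MvPolynomial (Fin 3) ℂ, F ≠ 0 ∧ F.IsHomogeneous t ∧
          ∀ i, eval (v i) F = 0) ∧ ∀ k < t, ¬ (2 * k ≤ d + 3 ∧ ∃ F : MvPolynomial (Fin 3) ℂ,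
            F ≠ 0 ∧ F.IsHomogeneous k ∧ ∀ i, eval (v i) F = 0) :=
      ⟨Nat.find hex, Nat.find_spec hex, fun k hk => Nat.find_min hex hk⟩
    have hmin : ∀ k, k < t → ∀ P : MvPolynomial (Fin 3) ℂ, P.IsHomogeneous k →
        (∀ i, eval (v i) P = 0) → P = 0 := by
      intro k hk P hP hPv
      by_contra hP0
      exact hmin' k hk ⟨by omega, P, hP0, hP, hPv⟩
    have ht1 : 1 ≤ t := by
      by_contra h0
      have h0 : t = 0 := by omega
      subst h0
      rw [← totalDegree_zero_iff_isHomogeneous, totalDegree_eq_zero_iff_eq_C] at hF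
      have := hFv (Classical.arbitrary ι)
      rw [hF, eval_C] at this
      rw [this, C_0] at hF
      exact hF0 hF
    refine ⟨t, ht1, ht, ?_, Or.inl ⟨F, hF0, hF, hFv⟩⟩
    obtain ⟨t, rfl⟩ : ∃ t', t = t' + 1 := ⟨t - 1, by omega⟩
    have r1 := range_of_inj v t (hmin t (by omega))
    by_cases hd : 2 * (t + 1) ≤ d + 1
    · obtain ⟨n, rfl⟩ : ∃ n, d = 2 * t + 1 + n := ⟨d - (2 * t + 1), by omega⟩
      have r2 := range_of_dvd v n (t + 1) F hF hF0 (fun P hP hPv =>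
        dvd_of_min v hv0 hv l hl _ (t + 1) h ht hmin F hF hF0 hFv P
          (by convert hP using 1; omega) hPv)
      have r3 := pairing v l hl t (t + 1 + n) (by
        intro P hP; refine h P ?_; convert hP using 1; omega)
      nlinarith
    · have r2 := range_of_inj v (d - t) (hmin (d - t) (by omega))
      have r3 := pairing v l hl t (d - t) (by
        intro P hP; refine h P ?_; convert hP using 1; omega)
      have : d = 2 * t ∨ d + 1 = 2 * t := by omega
      rcases this with rfl | hd2
      · rw [show 2 * t - t = t by omega] at *
        nlinarith
      · obtain ⟨s, rfl⟩ : ∃ s, t = s + 1 := ⟨t - 1, by omega⟩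
        obtain rfl : d = 2 * s + 1 := by omega
        rw [show 2 * s + 1 - (s + 1) = s by omega] at *
        nlinarith
  · have hmin : ∀ k, 2 * k ≤ d + 3 → ∀ P : MvPolynomial (Fin 3) ℂ, P.IsHomogeneous k →
        (∀ i, eval (v i) P = 0) → P = 0 := by
      intro k hk P hP hPv
      by_contra hP0
      exact hex ⟨k, hk, P, hP0, hP, hPv⟩
    obtain ⟨t, ht | ht⟩ : ∃ t, d = 2 * t ∨ d + 1 = 2 * t := ⟨(d + 1) / 2, by omega⟩
    all_goals
      refine ⟨t + 1, by omega, by omega, ?_, Or.inr (by omega)⟩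
      have r1 := range_of_inj v t (hmin t (by omega))
      have r2 := range_of_inj v (d - t) (hmin (d - t) (by omega))
      have r3 := pairing v l hl t (d - t) (by
        intro P hP; refine h P ?_; convert hP using 1; omega)
    · subst ht
      rw [show 2 * t - t = t by omega] at *
      nlinarith
    · obtain ⟨s, rfl⟩ : ∃ s, t = s + 1 := ⟨t - 1, by omega⟩
      obtain rfl : d = 2 * s + 1 := by omega
      rw [show 2 * s + 1 - (s + 1) = s by omega] at *
      nlinarith

lemma rep_ne (p q : ProjPt 2) (h : p ≠ q) (c : ℂ) : p.rep ≠ c • q.rep := by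
  intro hc
  have hc0 : c ≠ 0 := by
    rintro rfl
    rw [zero_smul] at hc
    exact p.rep_nonzero hc
  apply h
  rw [← p.mk_rep, ← q.mk_rep, Projectivization.mk_eq_mk_iff']
  exact ⟨c, hc.symm⟩

theorem stmt_2 (s : ℕ) (Pt : Fin s → ProjPt 2) (hinj : Function.Injective Pt)
    (d : ℕ) (hd : 3 ≤ d) (hcard : 6 * s ≤ d ^ 2 + 9 * d + 10)
    (hcurve : ∀ t : ℕ, 1 ≤ t → 2 * t ≤ d + 3 →
      ∀ C : MvPolynomial (Fin 3) ℂ, C ≠ 0 → C.IsHomogeneous t →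
        (({i : Fin s | VanishesAt C (Pt i)}).ncard : ℤ)
          ≤ (t : ℤ) * ((d : ℤ) + 3 - (t : ℤ)) - 2) :
    ∀ Q : ProjPt 2, Q ∉ Set.range Pt →
      ∃ F : MvPolynomial (Fin 3) ℂ, F.IsHomogeneous d ∧
        (∀ i : Fin s, VanishesAt F (Pt i)) ∧ ¬ VanishesAt F Q := by
  classical
  intro Q hQ
  by_contra hcon
  push Not at hcon
  let ev : ProjPt 2 → (homogeneousSubmodule (Fin 3) ℂ d →ₗ[ℂ] ℂ) := fun p =>
    (aeval (R := ℂ) p.rep).toLinearMap ∘ₗ (homogeneousSubmodule (Fin 3) ℂ d).subtype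
  have hev : ∀ p P, ev p P = eval p.rep P.1 := by
    intro p P
    simp [ev, aeval_eq_eval]
  have hspan : ev Q ∈ Submodule.span ℂ (Set.range fun i => ev (Pt i)) := by
    refine mem_span_of_iInf_ker_le_ker fun P hP => ?_
    rw [LinearMap.mem_ker, hev]
    refine hcon P.1 P.2 fun i => ?_
    rw [Submodule.mem_iInf] at hP
    have := hP i
    rwa [LinearMap.mem_ker, hev] at this
  obtain ⟨c, hc⟩ := (Submodule.mem_span_range_iff_exists_fun ℂ).mp hspan
  have hrel : ∀ P : MvPolynomial (Fin 3) ℂ, P.IsHomogeneous d →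
      ∑ i, c i * eval (Pt i).rep P = eval Q.rep P := by
    intro P hP
    have := DFunLike.congr_fun hc (⟨P, hP⟩ : homogeneousSubmodule (Fin 3) ℂ d)
    simpa [LinearMap.sum_apply, hev] using this
  let pt : Option {i // c i ≠ 0} → ProjPt 2 := fun o => o.elim Q fun i => Pt i.1
  have hpt : Function.Injective pt := by
    rintro (_ | i) (_ | j) hij
    · rfl
    · exact absurd ⟨j.1, hij.symm⟩ hQ
    · exact absurd ⟨i.1, hij⟩ hQ
    · exact congrArg some (Subtype.ext (hinj hij))
  let l : Option {i // c i ≠ 0} → ℂ := fun o => o.elim (-1) fun i => c i.1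
  obtain ⟨t, ht1, ht2, hle, hor⟩ := main_rel (ι := Option {i // c i ≠ 0}) (fun o => (pt o).rep)
    (fun o => (pt o).rep_nonzero) (fun i j hij => rep_ne _ _ (hpt.ne hij)) l
    (by rintro (_ | i)
        · simp [l]
        · exact i.2) d
    (by
      intro P hP
      rw [Fintype.sum_option]
      have h1 := hrel P hP
      rw [← Fintype.sum_subtype_add_sum_subtype (fun i => c i ≠ 0)] at h1
      have h2 : ∑ i : {i // ¬ (c i ≠ 0)}, c i.1 * eval (Pt i.1).rep P = 0 := by
        refine Finset.sum_eq_zero fun i _ => ?_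
        rw [not_not.mp i.2, zero_mul]
      rw [h2, add_zero] at h1
      simp only [l, pt, Option.elim]
      rw [h1]
      ring)
  rw [Fintype.card_option] at hle
  rcases hor with ⟨F, hF0, hF, hFv⟩ | ht3
  · have h1 := hcurve t ht1 ht2 F hF0 hF
    have h2 : Fintype.card {i // c i ≠ 0} ≤ ({i : Fin s | VanishesAt F (Pt i)}).ncard := by
      rw [← Nat.card_eq_fintype_card]
      change ({i : Fin s | c i ≠ 0}).ncard ≤ _
      exact Set.ncard_le_ncard (fun i hi => hFv (some ⟨i, hi⟩)) (Set.toFinite _)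
    zify at h2 hle
    nlinarith
  · have h2 : Fintype.card {i // c i ≠ 0} ≤ s := by
      have := Fintype.card_subtype_le (fun i => c i ≠ 0)
      rwa [Fintype.card_fin] at this
    have : d + 2 = 2 * t ∨ d + 3 = 2 * t := by omega
    rcases this with h | h
    · obtain ⟨k, rfl⟩ : ∃ k, t = k + 3 := ⟨t - 3, by omega⟩
      obtain rfl : d = 2 * k + 4 := by omega
      nlinarith
    · obtain ⟨k, rfl⟩ : ∃ k, t = k + 3 := ⟨t - 3, by omega⟩
      obtain rfl : d = 2 * k + 3 := by omega
      nlinarith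
end
end
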